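/- Let 𝒟 = {DF(w) : w ∈ Max}, regarded as a subspace of the space of nonempty compact subsets of ℝ³ with the Hausdorff metric. Then 𝒟 is totally ordered by inclusion, and there is a homeomorphism h from 𝒟 onto the compact interval [0,1] which is order-preserving: for Λ, Λ' ∈ 𝒟, Λ ⊆ Λ' if and only if h(Λ) ≤ h(Λ'). -/

import Mathlib

open Filter Topology MeasureTheory

/-- The sequence space `Σ⁺ = {0,1,2}^ℕ` (with the product topology). -/
abbrev Seq3 := ℕ → Fin 3

/-- The shift map `σ`. -/
def shift (s : Seq3) : Seq3 := fun n => s (n + 1)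

/-- The observable `κ(s) = e_{s₀}`. -/
noncomputable def kappa (s : Seq3) : Fin 3 → ℝ := fun i => if i = s 0 then 1 else 0

/-- The cocycle `κ_σ(s,r) = Σ_{i<r} κ(σⁱ s)`. -/
noncomputable def birk (s : Seq3) (r : ℕ) : Fin 3 → ℝ :=
  ∑ i ∈ Finset.range r, kappa (shift^[i] s)

/-- The Birkhoff digit frequency of `s` exists and equals `v`. -/
def hasFreq (s : Seq3) (v : Fin 3 → ℝ) : Prop :=
  Tendsto (fun r : ℕ => (r : ℝ)⁻¹ • birk s r) atTop (nhds v)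

/-- The lexicographic order on `Σ⁺`. -/
def lexLe (s t : Seq3) : Prop :=
  s = t ∨ ∃ n, (∀ i, i < n → s i = t i) ∧ s n < t n

/-- The set `Max` of maximal sequences. -/
def MaxSet : Set Seq3 := {w | w 0 = 2 ∧ ∀ r : ℕ, lexLe (shift^[r] w) w}

/-- The symbolic β-shift `B(w)`. -/
def BetaShift (w : Seq3) : Set Seq3 := {s | ∀ r : ℕ, lexLe (shift^[r] s) w}

/-- The digit frequency set `DF(w)`. -/
def DF (w : Seq3) : Set (Fin 3 → ℝ) := {v | ∃ s ∈ BetaShift w, hasFreq s v}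

/-- The Misiurewicz–Ziemian digit frequency set `DF_MZ(X)` of a subset `X ⊆ Σ⁺`. -/
def DFMZ (X : Set Seq3) : Set (Fin 3 → ℝ) :=
  {v | ∃ (s : ℕ → Seq3) (r : ℕ → ℕ), (∀ i, s i ∈ X) ∧ Tendsto r atTop atTop ∧
    Tendsto (fun i => (r i : ℝ)⁻¹ • birk (s i) (r i)) atTop (nhds v)}

/-- The standard 2-simplex `Δ ⊆ ℝ³`. -/
def Delta : Set (Fin 3 → ℝ) := {α | (∀ i, 0 ≤ α i) ∧ α 0 + α 1 + α 2 = 1}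

/-- `Δ' = {α ∈ Δ : α₂ > 0}`. -/
def Delta' : Set (Fin 3 → ℝ) := {α | α ∈ Delta ∧ 0 < α 2}

/-- `I` is the infimax sequence of `α`: the infimum, in the lexicographic order, of the
(nonempty) set of maximal sequences with digit frequency `α`; it belongs to `Max`. -/
def IsInfimax (α : Fin 3 → ℝ) (I : Seq3) : Prop :=
  {w | w ∈ MaxSet ∧ hasFreq w α}.Nonempty ∧ I ∈ MaxSet ∧
    (∀ w, w ∈ MaxSet ∧ hasFreq w α → lexLe I w) ∧
    (∀ b : Seq3, (∀ w, w ∈ MaxSet ∧ hasFreq w α → lexLe b w) → lexLe b I)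

/-- The closure of the forward `σ`-orbit of `s` (e.g. `C_α` is `orbitClosure I(α)`). -/
def orbitClosure (s : Seq3) : Set Seq3 := closure {t | ∃ r : ℕ, shift^[r] s = t}

/-- A vector in `ℝ³` is rational if all its coordinates are. -/
def IsRat (v : Fin 3 → ℝ) : Prop := ∀ i, ∃ q : ℚ, v i = (q : ℝ)

/-- A minimal set of a continuous map: a nonempty compact invariant set in which every
point has dense forward orbit. -/
def IsMinimalSet {X : Type*} [TopologicalSpace X] (f : X → X) (C : Set X) : Prop :=
  C.Nonempty ∧ IsCompact C ∧ Set.MapsTo f C C ∧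
    ∀ x ∈ C, C ⊆ closure {y | ∃ n : ℕ, f^[n] x = y}

/-! The map `w ↦ DF w` is monotone on `Max`, which is a compact space linearly ordered by the
lexicographic order, and it is continuous for the Hausdorff metric: a word of length `n` occurring
in `B(w₀)` can be used in `B(w)`, for any `w` with the same first `n` digits as `w₀`, once its last
nonzero digit is replaced by `0`, since such words can be concatenated freely. Replacing one digit
per block changes frequencies by at most `1 / n`. The same concatenation trick, with block lengths
growing slowly, identifies `DF w` with the Misiurewicz–Ziemian set of `B(w)`, which is closed.

`Max` has gaps, but `DF` takes the same value at the two ends `a ⋖ b` of a gap, so composing it with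
a Whitney map (a continuous strictly monotone real function on the hyperspace) gives a continuous
monotone function on `Max` whose range is an interval. The Whitney map then restricts to an order
isomorphism and homeomorphism from the compact chain of all `DF w` onto that interval.
-/

section MonotonePath

theorem le_iff_le_of_strictMono_of_mem_range {X E R : Type*} [LinearOrder X] [PartialOrder E]
    [Preorder R] {F : X → E} {φ : E → R} (hF : Monotone F) (hφ : StrictMono φ)
    {x y : E} (hx : x ∈ Set.range F) (hy : y ∈ Set.range F) : x ≤ y ↔ φ x ≤ φ y := by
  refine ⟨fun h => hφ.monotone h, fun h => ?_⟩
  obtain ⟨a, rfl⟩ := hx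
  obtain ⟨b, rfl⟩ := hy
  rcases le_total a b with hab | hba
  · exact hF hab
  · exact ((hF hba).eq_of_not_lt fun hlt => (hφ hlt).not_ge h).ge

variable {X : Type*} [LinearOrder X] [TopologicalSpace X] [CompactSpace X]
  [ClosedIicTopology X] [ClosedIciTopology X]

theorem ordConnected_range_of_covBy {Y : Type*} [LinearOrder Y] [TopologicalSpace Y]
    [ClosedIicTopology Y] [ClosedIciTopology Y] {f : X → Y} (hf : Continuous f) (hmono : Monotone f)
    (hcov : ∀ a b, a ⋖ b → f a = f b) : (Set.range f).OrdConnected := by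
  refine ⟨?_⟩
  rintro _ ⟨a, rfl⟩ _ ⟨b, rfl⟩ y ⟨hay, hyb⟩
  by_contra hy
  -- The last point with value below `y` and the first one with value above it form a covering pair.
  obtain ⟨u, hu : f u ≤ y, hu_max⟩ :=
    (isClosed_Iic.preimage hf).isCompact.exists_isGreatest ⟨a, hay⟩
  obtain ⟨v, hv : y ≤ f v, hv_min⟩ :=
    (isClosed_Ici.preimage hf).isCompact.exists_isLeast ⟨b, hyb⟩
  have huv : f u < f v :=
    (hu.lt_of_ne fun h => hy ⟨u, h⟩).trans_le hv
  have hcovBy : u ⋖ v := by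
    refine ⟨hmono.reflect_lt huv, fun c huc hcv => ?_⟩
    rcases le_total (f c) y with hc | hc
    · exact huc.not_ge (hu_max hc)
    · exact hcv.not_ge (hv_min hc)
  exact huv.ne (hcov u v hcovBy)

variable {E : Type*} [PartialOrder E] [TopologicalSpace E] {F : X → E} {φ : E → ℝ}

theorem exists_range_comp_eq_Icc_of_covBy (hF : Continuous F) (hmono : Monotone F)
    (hcov : ∀ a b, a ⋖ b → F a = F b) (hφ : Continuous φ) (hφ_mono : StrictMono φ)
    (hne : ∃ a b, F a ≠ F b) :
    ∃ p q : ℝ, p < q ∧ Set.range (φ ∘ F) = Set.Icc p q := by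
  obtain ⟨a, b, hab⟩ := hne
  have hg : Monotone (φ ∘ F) := hφ_mono.monotone.comp hmono
  obtain ⟨m, -, hm⟩ := (isCompact_univ (X := X)).exists_isLeast ⟨a, trivial⟩
  obtain ⟨M, -, hM⟩ := (isCompact_univ (X := X)).exists_isGreatest ⟨a, trivial⟩
  have hm_le (x : X) : F m ≤ F x := hmono (hm trivial)
  have hle_M (x : X) : F x ≤ F M := hmono (hM trivial)
  have hconn := ordConnected_range_of_covBy (hφ.comp hF) hg
    fun a b h => congrArg φ (hcov a b h)
  refine ⟨φ (F m), φ (F M), hφ_mono ((hm_le M).lt_of_ne fun hmM => hab ?_), ?_⟩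
  · have heq (x : X) : F x = F m := (hmM ▸ hle_M x).antisymm (hm_le x)
    rw [heq a, heq b]
  · refine Set.Subset.antisymm ?_ (hconn.out (Set.mem_range_self m) (Set.mem_range_self M))
    rintro _ ⟨x, rfl⟩
    exact ⟨hφ_mono.monotone (hm_le x), hφ_mono.monotone (hle_M x)⟩

theorem exists_homeomorph_range_Icc_of_covBy (hF : Continuous F) (hmono : Monotone F)
    (hcov : ∀ a b, a ⋖ b → F a = F b) (hφ : Continuous φ) (hφ_mono : StrictMono φ)
    (hne : ∃ a b, F a ≠ F b) :
    ∃ h : Set.range F ≃ₜ Set.Icc (0 : ℝ) 1, ∀ x y : Set.range F, (x : E) ≤ y ↔ (h x : ℝ) ≤ h y := by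
  obtain ⟨p, q, hpq, hrange⟩ := exists_range_comp_eq_Icc_of_covBy hF hmono hcov hφ hφ_mono hne
  have : CompactSpace (Set.range F) := isCompact_iff_compactSpace.1 (isCompact_range hF)
  have hle (x y : Set.range F) : (x : E) ≤ y ↔ φ x ≤ φ y :=
    le_iff_le_of_strictMono_of_mem_range hmono hφ_mono x.2 y.2
  have hinj : Function.Injective fun x : Set.range F => φ x := fun x y hxy =>
    Subtype.ext (((hle x y).2 hxy.le).antisymm ((hle y x).2 hxy.ge))
  have hemb := ((hφ.comp continuous_subtype_val).isClosedEmbedding hinj).isEmbedding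
  have hrange' : Set.range (fun x : Set.range F => φ x) = Set.Icc p q := by
    rw [← hrange, Set.range_comp φ F, ← Set.image_eq_range]
  refine ⟨(hemb.toHomeomorph.trans (.setCongr hrange')).trans (iccHomeoI p q hpq), fun x y => ?_⟩
  rw [hle]
  change _ ↔ (φ x - p) / (q - p) ≤ (φ y - p) / (q - p)
  rw [div_le_div_iff_of_pos_right (sub_pos.2 hpq), sub_le_sub_iff_right]

end MonotonePath

section Whitney

open TopologicalSpace

variable {α : Type*} [MetricSpace α] [SeparableSpace α] [Nonempty α]

/-- A Whitney map on the hyperspace of `α`: a continuous real-valued function that is strictly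
monotone for inclusion. The sign compensates for distances to `K` decreasing as `K` grows. -/
noncomputable def whitneyMap (K : NonemptyCompacts α) : ℝ :=
  -∑' n : ℕ, (1 / 2 : ℝ) ^ n * min 1 (Metric.infDist (denseSeq α n) K)

theorem norm_whitneyMap_term_le (n : ℕ) (K : NonemptyCompacts α) :
    ‖(1 / 2 : ℝ) ^ n * min 1 (Metric.infDist (denseSeq α n) K)‖ ≤ (1 / 2 : ℝ) ^ n := by
  have : 0 ≤ Metric.infDist (denseSeq α n) (K : Set α) := Metric.infDist_nonneg
  rw [Real.norm_of_nonneg (by positivity)]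
  exact mul_le_of_le_one_right (by positivity) (min_le_left _ _)

theorem continuous_whitneyMap : Continuous (whitneyMap (α := α)) :=
  (continuous_tsum (fun _ => continuous_const.mul
    (continuous_const.min (Metric.lipschitz_infDist_set _).continuous))
    summable_geometric_two norm_whitneyMap_term_le).neg

theorem exists_infDist_denseSeq_lt {K K' : NonemptyCompacts α} (h : K < K') :
    ∃ n, Metric.infDist (denseSeq α n) K' < min 1 (Metric.infDist (denseSeq α n) K) := by
  obtain ⟨x, hxK', hxK⟩ := SetLike.exists_of_lt h
  have hpos : 0 < Metric.infDist x K :=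
    (K.isCompact.isClosed.notMem_iff_infDist_pos K.nonempty).1 hxK
  obtain ⟨n, hn⟩ := (denseRange_denseSeq α).exists_dist_lt x
    (lt_min one_pos (half_pos hpos))
  refine ⟨n, ((Metric.infDist_le_dist_of_mem hxK').trans_lt (dist_comm x _ ▸ hn)).trans_le
    (min_le_min_left 1 ?_)⟩
  have := Metric.infDist_le_infDist_add_dist (s := (K : Set α)) (x := x) (y := denseSeq α n)
  linarith [hn.trans_le (min_le_right _ _)]

theorem strictMono_whitneyMap : StrictMono (whitneyMap (α := α)) := by
  intro K K' h
  have hsummable (L : NonemptyCompacts α) := Summable.of_norm_bounded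
    summable_geometric_two fun n => norm_whitneyMap_term_le n L
  obtain ⟨n, hn⟩ := exists_infDist_denseSeq_lt h
  refine neg_lt_neg ((hsummable K').tsum_lt_tsum (i := n) (fun m => ?_) ?_ (hsummable K))
  · gcongr
    exact Metric.infDist_le_infDist_of_subset h.le K.nonempty
  · gcongr
    exact (min_le_right _ _).trans_lt hn

end Whitney

section Lex

instance topologicalSpaceLex {α : Type*} [TopologicalSpace α] : TopologicalSpace (Lex α) :=
  inferInstanceAs (TopologicalSpace α)

instance compactSpaceLex {α : Type*} [TopologicalSpace α] [CompactSpace α] : CompactSpace (Lex α) :=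
  inferInstanceAs (CompactSpace α)

theorem continuous_toLex {α : Type*} [TopologicalSpace α] : Continuous (toLex : α → Lex α) :=
  continuous_id

theorem continuous_ofLex {α : Type*} [TopologicalSpace α] : Continuous (ofLex : Lex α → α) :=
  continuous_id

theorem toLex_le_toLex_iff_forall {ι α : Type*} [LinearOrder ι] [WellFoundedLT ι] [LinearOrder α]
    {s t : ι → α} : toLex s ≤ toLex t ↔ ∀ n, (∀ i < n, s i = t i) → s n ≤ t n := by
  rw [← not_lt]
  change (¬∃ n, (∀ i < n, t i = s i) ∧ t n < s n) ↔ _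
  push Not
  simp only [eq_comm]

instance orderClosedTopologyLex {α : Type*} [LinearOrder α] [TopologicalSpace α]
    [DiscreteTopology α] : OrderClosedTopology (Lex (ℕ → α)) where
  isClosed_le' := by
    have hcont (i : ℕ) : Continuous fun p : Lex (ℕ → α) × Lex (ℕ → α) =>
        (ofLex p.1 i, ofLex p.2 i) :=
      ((continuous_apply i).comp (continuous_ofLex.comp continuous_fst)).prodMk
        ((continuous_apply i).comp (continuous_ofLex.comp continuous_snd))
    have hset : {p : Lex (ℕ → α) × Lex (ℕ → α) | p.1 ≤ p.2} =
        ⋂ n, {p : Lex (ℕ → α) × Lex (ℕ → α) |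
          (∀ i < n, ofLex p.1 i = ofLex p.2 i) → ofLex p.1 n ≤ ofLex p.2 n} := by
      ext p
      rw [Set.mem_iInter]
      exact toLex_le_toLex_iff_forall
    rw [hset]
    refine isClosed_iInter fun n => isClosed_imp ?_ ?_
    · simp only [Set.ofPred_forall]
      exact (Set.finite_Iio n).isOpen_biInter fun i _ =>
        (isOpen_discrete {q : α × α | q.1 = q.2}).preimage (hcont i)
    · exact (isClosed_discrete {q : α × α | q.1 ≤ q.2}).preimage (hcont n)

end Lex

section Blocks

open Asymptotics

/-- The position at which the `j`-th block starts when blocks of lengths `ℓ 0, ℓ 1, …` are laid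
end to end. -/
def blockStart (ℓ : ℕ → ℕ) (j : ℕ) : ℕ := ∑ i ∈ Finset.range j, ℓ i

/-- The index of the block containing position `k` when blocks of positive lengths `ℓ 0, ℓ 1, …`
are laid end to end. -/
def blockIndex (ℓ : ℕ → ℕ) (k : ℕ) : ℕ := Nat.findGreatest (blockStart ℓ · ≤ k) k

variable {ℓ : ℕ → ℕ}

theorem blockStart_add_one (j : ℕ) : blockStart ℓ (j + 1) = blockStart ℓ j + ℓ j :=
  Finset.sum_range_succ ..

theorem strictMono_blockStart (hℓ : ∀ j, 0 < ℓ j) : StrictMono (blockStart ℓ) :=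
  strictMono_nat_of_lt_succ fun j => by
    simpa only [blockStart_add_one, lt_add_iff_pos_right] using hℓ j

theorem blockStart_blockIndex_le (k : ℕ) : blockStart ℓ (blockIndex ℓ k) ≤ k :=
  Nat.findGreatest_spec (P := (blockStart ℓ · ≤ k)) (Nat.zero_le k) (Nat.zero_le k)

theorem le_blockIndex (hℓ : ∀ j, 0 < ℓ j) {j k : ℕ} (h : blockStart ℓ j ≤ k) :
    j ≤ blockIndex ℓ k :=
  Nat.le_findGreatest (((strictMono_blockStart hℓ).id_le j).trans h) h

theorem tendsto_blockIndex (hℓ : ∀ j, 0 < ℓ j) : Tendsto (blockIndex ℓ) atTop atTop :=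
  tendsto_atTop.2 fun j => (eventually_ge_atTop (blockStart ℓ j)).mono fun _ => le_blockIndex hℓ

theorem lt_blockStart_blockIndex_add_one (hℓ : ∀ j, 0 < ℓ j) (k : ℕ) :
    k < blockStart ℓ (blockIndex ℓ k + 1) :=
  not_le.1 fun h => (Nat.lt_succ_self _).not_ge (le_blockIndex hℓ h)

theorem blockIndex_blockStart_add (hℓ : ∀ j, 0 < ℓ j) {j i : ℕ} (hi : i < ℓ j) :
    blockIndex ℓ (blockStart ℓ j + i) = j := by
  refine (Nat.lt_succ_iff.1 ((strictMono_blockStart hℓ).lt_iff_lt.1 ?_)).antisymm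
    (le_blockIndex hℓ (Nat.le_add_right _ i))
  calc blockStart ℓ (blockIndex ℓ (blockStart ℓ j + i)) ≤ blockStart ℓ j + i :=
        blockStart_blockIndex_le _
    _ < blockStart ℓ (j + 1) := by rw [blockStart_add_one]; lia

theorem exists_blockStart_add_eq (hℓ : ∀ j, 0 < ℓ j) (k : ℕ) :
    ∃ j, ∃ i < ℓ j, blockStart ℓ j + i = k := by
  have hlt := lt_blockStart_blockIndex_add_one hℓ k
  rw [blockStart_add_one] at hlt
  have hle := blockStart_blockIndex_le (ℓ := ℓ) k
  exact ⟨blockIndex ℓ k, k - blockStart ℓ (blockIndex ℓ k), by lia, by lia⟩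

theorem sum_range_blockStart {M : Type*} [AddCommMonoid M] (u : ℕ → M) (j : ℕ) :
    ∑ i ∈ Finset.range (blockStart ℓ j), u i =
      ∑ m ∈ Finset.range j, ∑ i ∈ Finset.range (ℓ m), u (blockStart ℓ m + i) := by
  induction j with
  | zero => rfl
  | succ j ih => rw [blockStart_add_one, Finset.sum_range_add, ih, Finset.sum_range_succ]

theorem isLittleO_sum_range_blockStart {E : Type*} [NormedAddCommGroup E] {u : ℕ → E}
    (hℓ : ∀ j, 0 < ℓ j)
    (hblock : (fun j => ∑ i ∈ Finset.range (ℓ j), u (blockStart ℓ j + i)) =o[atTop]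
      fun j => (ℓ j : ℝ)) :
    (fun j => ∑ i ∈ Finset.range (blockStart ℓ j), u i) =o[atTop]
      fun j => (blockStart ℓ j : ℝ) := by
  have hcast (j : ℕ) : (blockStart ℓ j : ℝ) = ∑ i ∈ Finset.range j, (ℓ i : ℝ) := Nat.cast_sum ..
  have htop : Tendsto (fun j => (blockStart ℓ j : ℝ)) atTop atTop :=
    tendsto_natCast_atTop_atTop.comp (strictMono_blockStart hℓ).tendsto_atTop
  simp only [sum_range_blockStart, hcast] at htop ⊢
  exact hblock.sum_range (fun j => Nat.cast_nonneg (ℓ j)) htop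

theorem isLittleO_sum_range_of_blocks {E : Type*} [NormedAddCommGroup E] {u : ℕ → E} {C : ℝ}
    (hu : ∀ i, ‖u i‖ ≤ C) (hℓ : ∀ j, 0 < ℓ j)
    (hℓo : (fun j => (ℓ j : ℝ)) =o[atTop] fun j => (blockStart ℓ j : ℝ))
    (hblock : (fun j => ∑ i ∈ Finset.range (ℓ j), u (blockStart ℓ j + i)) =o[atTop]
      fun j => (ℓ j : ℝ)) :
    (fun k => ∑ i ∈ Finset.range k, u i) =o[atTop] fun k => (k : ℝ) := by
  have hrest : (fun k => ∑ i ∈ Finset.range k, u i -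
      ∑ i ∈ Finset.range (blockStart ℓ (blockIndex ℓ k)), u i) =O[atTop]
      fun k => (ℓ (blockIndex ℓ k) : ℝ) := by
    refine .of_bound C (.of_forall fun k => ?_)
    obtain ⟨j, i, hi, rfl⟩ := exists_blockStart_add_eq hℓ k
    rw [blockIndex_blockStart_add hℓ hi, Finset.sum_range_add, add_sub_cancel_left,
      Real.norm_natCast]
    calc ‖∑ m ∈ Finset.range i, u (blockStart ℓ j + m)‖ ≤ i • C := by
          simpa using norm_sum_le_of_le (Finset.range i) fun m _ => hu (blockStart ℓ j + m)
      _ ≤ C * ℓ j := by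
          rw [nsmul_eq_mul, mul_comm]
          have := (norm_nonneg _).trans (hu 0)
          gcongr
  have hle : (fun k => (blockStart ℓ (blockIndex ℓ k) : ℝ)) =O[atTop] fun k => (k : ℝ) :=
    .of_bound' (.of_forall fun k => by simpa using blockStart_blockIndex_le k)
  have hJ := tendsto_blockIndex hℓ
  have hstart := (isLittleO_sum_range_blockStart hℓ hblock).comp_tendsto hJ
  exact ((hstart.add (hrest.trans_isLittleO (hℓo.comp_tendsto hJ))).trans_isBigO hle).congr_left
    fun k => add_sub_cancel ..

theorem exists_tendsto_atTop_isLittleO_comp (r : ℕ → ℕ) :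
    ∃ p : ℕ → ℕ, Tendsto p atTop atTop ∧
      (fun j => (r (p j) : ℝ)) =o[atTop] fun j => (j : ℝ) := by
  -- `p` stays at the value `k` long enough for `k * r k ≤ j` to hold whenever `p j = k`.
  let ℓ : ℕ → ℕ := fun k => (k + 1) * r (k + 1) + 1
  have hp : Tendsto (blockIndex ℓ) atTop atTop := tendsto_blockIndex fun k => Nat.succ_pos _
  have hstart (k : ℕ) : k * r k ≤ blockStart ℓ k := by
    cases k with
    | zero => simp
    | succ k => rw [blockStart_add_one]; lia
  refine ⟨blockIndex ℓ, hp, isLittleO_iff.2 fun c hc => ?_⟩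
  filter_upwards [(tendsto_natCast_atTop_atTop.comp hp).eventually_ge_atTop c⁻¹] with j hj
  have hle : (blockIndex ℓ j * r (blockIndex ℓ j) : ℝ) ≤ j :=
    mod_cast (hstart _).trans (blockStart_blockIndex_le j)
  rw [Real.norm_natCast, Real.norm_natCast, ← inv_mul_le_iff₀ hc]
  exact (mul_le_mul_of_nonneg_right hj (Nat.cast_nonneg _)).trans hle

theorem tendsto_inv_smul_iff_isLittleO {ι E : Type*} [NormedAddCommGroup E] [NormedSpace ℝ E]
    {f : Filter ι} {a : ι → E} {c : ι → ℝ} {v : E} (hc : ∀ᶠ i in f, c i ≠ 0) :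
    Tendsto (fun i => (c i)⁻¹ • a i) f (𝓝 v) ↔ (fun i => a i - c i • v) =o[f] c := by
  rw [tendsto_iff_norm_sub_tendsto_zero, ← isLittleO_norm_norm,
    isLittleO_iff_tendsto' (hc.mono fun i hi h => absurd (norm_eq_zero.1 h) hi)]
  refine tendsto_congr' (hc.mono fun i hi => ?_)
  have hsub : (c i)⁻¹ • a i - v = (c i)⁻¹ • (a i - c i • v) := by
    rw [smul_sub, inv_smul_smul₀ hi]
  dsimp only
  rw [hsub, norm_smul, norm_inv, inv_mul_eq_div]

end Blocks

section LexOrder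

theorem lexLe_iff_toLex_le {s t : Seq3} : lexLe s t ↔ toLex s ≤ toLex t :=
  (le_iff_eq_or_lt (a := toLex s) (b := toLex t)).symm

theorem lexLe_iff_forall {s t : Seq3} : lexLe s t ↔ ∀ n, (∀ i < n, s i = t i) → s n ≤ t n :=
  lexLe_iff_toLex_le.trans toLex_le_toLex_iff_forall

theorem lexLe_trans {s t u : Seq3} (hst : lexLe s t) (htu : lexLe t u) : lexLe s u :=
  lexLe_iff_toLex_le.2 ((lexLe_iff_toLex_le.1 hst).trans (lexLe_iff_toLex_le.1 htu))

theorem shift_iterate_apply (s : Seq3) (r i : ℕ) : shift^[r] s i = s (r + i) := by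
  induction r generalizing i with
  | zero => rw [Function.iterate_zero_apply, zero_add]
  | succ r ih => rw [Function.iterate_succ_apply', shift, ih, add_right_comm, add_assoc]

theorem shift_iterate_mem_betaShift {s w : Seq3} (hs : s ∈ BetaShift w) (m : ℕ) :
    shift^[m] s ∈ BetaShift w := fun r => by
  rw [← Function.iterate_add_apply]
  exact hs (r + m)

theorem apply_add_le_of_mem_betaShift {s w : Seq3} (hs : s ∈ BetaShift w) {p q : ℕ}
    (h : ∀ i < q, s (p + i) = w i) : s (p + q) ≤ w q := by
  simpa only [shift_iterate_apply] using
    lexLe_iff_forall.1 (hs p) q (by simpa only [shift_iterate_apply] using h)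

theorem betaShift_mono {w w' : Seq3} (h : lexLe w w') : BetaShift w ⊆ BetaShift w' :=
  fun _ hs r => lexLe_trans (hs r) h

theorem DF_mono {w w' : Seq3} (h : lexLe w w') : DF w ⊆ DF w' :=
  fun _ ⟨s, hs, hv⟩ => ⟨s, betaShift_mono h hs, hv⟩

end LexOrder

section Frequency

open Asymptotics

theorem birk_eq_sum (s : Seq3) (r : ℕ) :
    birk s r = ∑ i ∈ Finset.range r, Pi.single (s i) (1 : ℝ) := by
  refine Finset.sum_congr rfl fun i _ => funext fun a => ?_
  rw [Pi.single_apply, kappa, shift_iterate_apply, add_zero]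

theorem norm_birk_le (s : Seq3) (r : ℕ) : ‖birk s r‖ ≤ r := by
  rw [birk_eq_sum]
  refine (norm_sum_le _ _).trans_eq ?_
  simp only [Pi.norm_single, norm_one, Finset.sum_const, Finset.card_range, nsmul_one]

theorem norm_inv_smul_birk_le_one (s : Seq3) (r : ℕ) : ‖(r : ℝ)⁻¹ • birk s r‖ ≤ 1 := by
  rw [norm_smul, norm_inv, Real.norm_natCast]
  exact inv_mul_le_one_of_le₀ (norm_birk_le s r) (Nat.cast_nonneg r)

theorem sum_range_single_sub (s : Seq3) (v : Fin 3 → ℝ) (r : ℕ) :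
    ∑ i ∈ Finset.range r, (Pi.single (s i) 1 - v) = birk s r - (r : ℝ) • v := by
  rw [Finset.sum_sub_distrib, birk_eq_sum, Finset.sum_const, Finset.card_range,
    Nat.cast_smul_eq_nsmul]

theorem hasFreq_iff_isLittleO {s : Seq3} {v : Fin 3 → ℝ} :
    hasFreq s v ↔ (fun r => birk s r - (r : ℝ) • v) =o[atTop] fun r => (r : ℝ) :=
  tendsto_inv_smul_iff_isLittleO
    ((eventually_ne_atTop 0).mono fun _ hr => Nat.cast_ne_zero.2 hr)

theorem hasFreq_of_eventually_eq {s : Seq3} {a : Fin 3} (h : ∀ᶠ i in atTop, s i = a) :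
    hasFreq s (Pi.single a 1) := by
  have hlim : Tendsto (fun i => (Pi.single (s i) 1 : Fin 3 → ℝ)) atTop (𝓝 (Pi.single a 1)) :=
    tendsto_const_nhds.congr' (h.mono fun i hi => congrArg (Pi.single · 1) hi.symm)
  simpa only [hasFreq, birk_eq_sum] using hlim.cesaro_smul

theorem apply_eq_zero_of_hasFreq {s : Seq3} {v : Fin 3 → ℝ} {a : Fin 3} (hv : hasFreq s v)
    (h : ∀ᶠ i in atTop, s i ≠ a) : v a = 0 := by
  have hlim : Tendsto (fun i => (Pi.single (s i) 1 : Fin 3 → ℝ) a) atTop (𝓝 0) :=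
    tendsto_const_nhds.congr' (h.mono fun i hi => by simp only [Pi.single_eq_of_ne hi.symm])
  refine tendsto_nhds_unique (tendsto_pi_nhds.1 hv a) ?_
  simpa only [birk_eq_sum, Pi.smul_apply, Finset.sum_apply] using hlim.cesaro_smul

theorem single_zero_mem_DF (w : Seq3) : Pi.single 0 1 ∈ DF w := by
  refine ⟨fun _ => 0, fun r => lexLe_iff_forall.2 fun n _ => ?_,
    hasFreq_of_eventually_eq (.of_forall fun _ => rfl)⟩
  rw [shift_iterate_apply]
  exact Fin.zero_le _

theorem DF_subset_closedBall (w : Seq3) : DF w ⊆ Metric.closedBall 0 1 := by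
  rintro v ⟨s, -, hv⟩
  refine Metric.isClosed_closedBall.mem_of_tendsto hv (.of_forall fun r => ?_)
  exact mem_closedBall_zero_iff.2 (norm_inv_smul_birk_le_one s r)

theorem DFMZ_eq_iInter_closure (X : Set Seq3) :
    DFMZ X = ⋂ N : ℕ, closure {x | ∃ s ∈ X, ∃ r ≥ N, (r : ℝ)⁻¹ • birk s r = x} := by
  refine Set.Subset.antisymm ?_ fun v hv => ?_
  · rintro v ⟨s, r, hs, hr, hv⟩
    refine Set.mem_iInter.2 fun N => mem_closure_of_tendsto hv ?_
    exact (hr.eventually_ge_atTop N).mono fun i hi => ⟨s i, hs i, r i, hi, rfl⟩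
  · have hnear (N : ℕ) : ∃ s ∈ X, ∃ r ≥ N, dist ((r : ℝ)⁻¹ • birk s r) v < 1 / ((N : ℝ) + 1) := by
      obtain ⟨_, ⟨s, hs, r, hr, rfl⟩, hdist⟩ :=
        Metric.mem_closure_iff.1 (Set.mem_iInter.1 hv N) _ Nat.one_div_pos_of_nat
      exact ⟨s, hs, r, hr, dist_comm v _ ▸ hdist⟩
    choose s hs r hr hdist using hnear
    exact ⟨s, r, hs, tendsto_atTop_mono hr tendsto_id, tendsto_iff_dist_tendsto_zero.2
      (squeeze_zero (fun _ => dist_nonneg) (fun N => (hdist N).le)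
        tendsto_one_div_add_atTop_nhds_zero_nat)⟩

theorem isClosed_DFMZ (X : Set Seq3) : IsClosed (DFMZ X) := by
  rw [DFMZ_eq_iInter_closure]
  exact isClosed_iInter fun _ => isClosed_closure

end Frequency

section Concatenation

open Asymptotics

/-- The sequence obtained by laying end to end the initial words of lengths `ℓ 0, ℓ 1, …` of the
sequences `y 0, y 1, …`. -/
def concat {α : Type*} (ℓ : ℕ → ℕ) (y : ℕ → ℕ → α) (k : ℕ) : α :=
  y (blockIndex ℓ k) (k - blockStart ℓ (blockIndex ℓ k))

theorem concat_blockStart_add {α : Type*} {ℓ : ℕ → ℕ} (hℓ : ∀ j, 0 < ℓ j) (y : ℕ → ℕ → α)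
    {j i : ℕ} (hi : i < ℓ j) : concat ℓ y (blockStart ℓ j + i) = y j i := by
  rw [concat, blockIndex_blockStart_add hℓ hi, Nat.add_sub_cancel_left]

variable {ℓ : ℕ → ℕ} {y : ℕ → Seq3}

theorem hasFreq_concat {v : Fin 3 → ℝ} (hℓ : ∀ j, 0 < ℓ j)
    (hℓo : (fun j => (ℓ j : ℝ)) =o[atTop] fun j => (blockStart ℓ j : ℝ))
    (hblock : (fun j => birk (y j) (ℓ j) - (ℓ j : ℝ) • v) =o[atTop] fun j => (ℓ j : ℝ)) :
    hasFreq (concat ℓ y) v := by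
  simp only [hasFreq_iff_isLittleO, ← sum_range_single_sub] at hblock ⊢
  refine isLittleO_sum_range_of_blocks (C := 1 + ‖v‖) (fun i => ?_) hℓ hℓo
    (hblock.congr_left fun j => Finset.sum_congr rfl fun i hi => ?_)
  · exact (norm_sub_le _ _).trans_eq (by rw [Pi.norm_single, norm_one])
  · rw [concat_blockStart_add hℓ y (Finset.mem_range.1 hi)]

theorem birk_blockStart (s : Seq3) (j : ℕ) :
    birk s (blockStart ℓ j) = ∑ m ∈ Finset.range j, birk (shift^[blockStart ℓ m] s) (ℓ m) := by
  simp only [birk_eq_sum, sum_range_blockStart, shift_iterate_apply]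

theorem birk_concat_blockStart (hℓ : ∀ j, 0 < ℓ j) (j : ℕ) :
    birk (concat ℓ y) (blockStart ℓ j) = ∑ m ∈ Finset.range j, birk (y m) (ℓ m) := by
  simp only [birk_eq_sum, sum_range_blockStart]
  refine Finset.sum_congr rfl fun m _ => Finset.sum_congr rfl fun i hi => ?_
  rw [concat_blockStart_add hℓ y (Finset.mem_range.1 hi)]

theorem concat_mem_betaShift {w : Seq3} (hℓ : ∀ j, 0 < ℓ j)
    (hy : ∀ j, ∀ p < ℓ j, ∃ q, p + q < ℓ j ∧ (∀ i < q, y j (p + i) = w i) ∧ y j (p + q) < w q) :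
    concat ℓ y ∈ BetaShift w := by
  intro r
  obtain ⟨j, p, hp, rfl⟩ := exists_blockStart_add_eq hℓ r
  obtain ⟨q, hq, heq, hlt⟩ := hy j p hp
  refine Or.inr ⟨q, fun i hi => ?_, ?_⟩
  · rw [shift_iterate_apply, add_assoc, concat_blockStart_add hℓ y (by lia), heq i hi]
  · rwa [shift_iterate_apply, add_assoc, concat_blockStart_add hℓ y hq]

end Concatenation

section ZeroLast

/-- The sequence `s` with the last nonzero digit among its first `n` digits replaced by `0`. The
search for that digit falls back to position `0`, so nothing changes if all of these digits are
`0`. -/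
def zeroLast (n : ℕ) (s : Seq3) : Seq3 :=
  Function.update s (Nat.findGreatest (s · ≠ 0) (n - 1)) 0

theorem norm_birk_update_sub_birk_le (s : Seq3) (m : ℕ) (a : Fin 3) (n : ℕ) :
    ‖birk (Function.update s m a) n - birk s n‖ ≤ 1 := by
  have hterm (i : ℕ) (hi : i ≠ m) : (Pi.single (Function.update s m a i) 1 : Fin 3 → ℝ) -
      Pi.single (s i) 1 = 0 := by
    rw [Function.update_of_ne hi, sub_self]
  rw [birk_eq_sum, birk_eq_sum, ← Finset.sum_sub_distrib]
  by_cases hm : m ∈ Finset.range n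
  · rw [Finset.sum_eq_single_of_mem m hm fun i _ => hterm i, pi_norm_le_iff_of_nonneg zero_le_one]
    intro b
    rw [Pi.sub_apply, Pi.single_apply, Pi.single_apply]
    split_ifs <;> norm_num
  · rw [Finset.sum_eq_zero fun i hi => hterm i (ne_of_mem_of_not_mem hi hm), norm_zero]
    exact zero_le_one

theorem norm_birk_zeroLast_sub_birk_le (n : ℕ) (s : Seq3) (m : ℕ) :
    ‖birk (zeroLast n s) m - birk s m‖ ≤ 1 :=
  norm_birk_update_sub_birk_le ..

theorem zeroLast_eq_zero {n i : ℕ} {s : Seq3} (hi : i < n)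
    (h : Nat.findGreatest (s · ≠ 0) (n - 1) ≤ i) : zeroLast n s i = 0 := by
  rcases h.eq_or_lt with rfl | h
  · exact Function.update_self ..
  · rw [zeroLast, Function.update_of_ne h.ne']
    exact not_not.1 (Nat.findGreatest_is_greatest h (Nat.le_sub_one_of_lt hi))

theorem zeroLast_eq_of_lt {n i : ℕ} {s : Seq3}
    (h : i < Nat.findGreatest (s · ≠ 0) (n - 1)) : zeroLast n s i = s i :=
  Function.update_of_ne h.ne _ _

theorem exists_zeroLast_ne {n p : ℕ} {s w : Seq3} (hw : w 0 ≠ 0) (hp : p < n)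
    (hs : ∀ q, p + q < n → (∀ i < q, s (p + i) = w i) → s (p + q) ≤ w q) :
    ∃ q, p + q < n ∧ zeroLast n s (p + q) ≠ w q := by
  by_contra! heq
  set L := Nat.findGreatest (s · ≠ 0) (n - 1) with hL
  have hpL : p < L := by
    by_contra! hLp
    exact hw ((heq 0 hp).symm.trans (zeroLast_eq_zero hp hLp))
  obtain ⟨q, hq⟩ := Nat.exists_eq_add_of_le hpL.le
  have hqn : p + q < n := by
    have : L ≤ n - 1 := Nat.findGreatest_le _
    lia
  have hsL : s L ≠ 0 := Nat.findGreatest_of_ne_zero hL.symm (by lia)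
  have hle : s (p + q) ≤ w q := hs q hqn fun i hi => by
    rw [← heq i (by lia), zeroLast_eq_of_lt (by lia)]
  rw [← heq q hqn, zeroLast_eq_zero hqn hq.le, ← hq] at hle
  exact hsL (Fin.le_zero_iff.1 hle)

/-- Every subword starting inside the block drops strictly below `w` before the block ends, so
whatever follows the block cannot lift it above `w`. -/
theorem exists_zeroLast_lt {n p : ℕ} {s w : Seq3} (hw : w 0 ≠ 0) (hp : p < n)
    (hs : ∀ q, p + q < n → (∀ i < q, s (p + i) = w i) → s (p + q) ≤ w q) :
    ∃ q, p + q < n ∧ (∀ i < q, zeroLast n s (p + i) = w i) ∧ zeroLast n s (p + q) < w q := by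
  have hne := exists_zeroLast_ne hw hp hs
  classical
  obtain ⟨hq, hqne⟩ := Nat.find_spec hne
  have heq (i : ℕ) (hi : i < Nat.find hne) : zeroLast n s (p + i) = w i :=
    not_not.1 fun h => Nat.find_min hne hi ⟨by lia, h⟩
  refine ⟨Nat.find hne, hq, heq, lt_of_le_of_ne ?_ hqne⟩
  rcases le_or_gt (Nat.findGreatest (s · ≠ 0) (n - 1)) (p + Nat.find hne) with hL | hL
  · rw [zeroLast_eq_zero hq hL]
    exact Fin.zero_le _
  · rw [zeroLast_eq_of_lt hL]
    refine hs _ hq fun i hi => ?_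
    rw [← heq i hi, zeroLast_eq_of_lt (by lia)]

end ZeroLast

section DigitFrequencySet

open Asymptotics

theorem DF_subset_DFMZ (w : Seq3) : DF w ⊆ DFMZ (BetaShift w) :=
  fun _ ⟨s, hs, hv⟩ => ⟨fun _ => s, id, fun _ => hs, tendsto_id, hv⟩

theorem DFMZ_subset_DF {w : Seq3} (hw : w 0 ≠ 0) : DFMZ (BetaShift w) ⊆ DF w := by
  rintro v ⟨s, r, hs, hr, hv⟩
  obtain ⟨N, hN⟩ := eventually_atTop.1 (hr.eventually_gt_atTop 0)
  obtain ⟨p, hp, hpo⟩ := exists_tendsto_atTop_isLittleO_comp fun i => r (i + N)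
  have hι : Tendsto (fun j => p j + N) atTop atTop := (tendsto_add_atTop_nat N).comp hp
  let ℓ : ℕ → ℕ := fun j => r (p j + N)
  let y : ℕ → Seq3 := fun j => zeroLast (ℓ j) (s (p j + N))
  have hℓ (j : ℕ) : 0 < ℓ j := hN _ (Nat.le_add_left N _)
  have hℓ_top : Tendsto (fun j => (ℓ j : ℝ)) atTop atTop :=
    tendsto_natCast_atTop_atTop.comp (hr.comp hι)
  have hℓo : (fun j => (ℓ j : ℝ)) =o[atTop] fun j => (blockStart ℓ j : ℝ) :=
    hpo.trans_isBigO (.of_bound' (.of_forall fun j => by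
      simpa using (strictMono_blockStart hℓ).id_le j))
  have hzero : (fun j => birk (y j) (ℓ j) - birk (s (p j + N)) (ℓ j)) =o[atTop]
      fun j => (ℓ j : ℝ) :=
    (IsBigO.of_bound 1 (.of_forall fun j => by
      simpa using norm_birk_zeroLast_sub_birk_le (ℓ j) (s (p j + N)) (ℓ j))).trans_isLittleO
      (isLittleO_const_left.2 (.inr (tendsto_norm_atTop_atTop.comp hℓ_top)) :
        (fun _ => (1 : ℝ)) =o[atTop] _)
  have hs_block : (fun j => birk (s (p j + N)) (ℓ j) - (ℓ j : ℝ) • v) =o[atTop]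
      fun j => (ℓ j : ℝ) :=
    (tendsto_inv_smul_iff_isLittleO (hℓ_top.eventually_ne_atTop 0)).1 (hv.comp hι)
  refine ⟨concat ℓ y, concat_mem_betaShift hℓ fun j i hi => exists_zeroLast_lt hw hi
    fun q _ => apply_add_le_of_mem_betaShift (hs _), hasFreq_concat hℓ hℓo ?_⟩
  exact (hzero.add hs_block).congr_left fun j => sub_add_sub_cancel ..

theorem isCompact_DF {w : Seq3} (hw : w 0 ≠ 0) : IsCompact (DF w) := by
  refine (isCompact_closedBall 0 1).of_isClosed_subset ?_ (DF_subset_closedBall w)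
  rw [(DF_subset_DFMZ w).antisymm (DFMZ_subset_DF hw)]
  exact isClosed_DFMZ _

theorem exists_mem_betaShift_norm_birk_sub_le {w₀ w s : Seq3} {n : ℕ} (hw : w 0 ≠ 0)
    (hn : 0 < n) (h : ∀ i < n, w₀ i = w i) (hs : s ∈ BetaShift w₀) :
    ∃ x ∈ BetaShift w, ∀ j, ‖birk x (blockStart (fun _ => n) j) -
      birk s (blockStart (fun _ => n) j)‖ ≤ j := by
  refine ⟨concat (fun _ => n) fun j => zeroLast n (shift^[blockStart (fun _ => n) j] s),
    concat_mem_betaShift (fun _ => hn) fun j p hp => exists_zeroLast_lt hw hp fun q hq heq => ?_,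
    fun j => ?_⟩
  · rw [← h q (by lia)]
    exact apply_add_le_of_mem_betaShift (shift_iterate_mem_betaShift hs _)
      fun i hi => (heq i hi).trans (h i (by lia)).symm
  · rw [birk_concat_blockStart fun _ => hn, birk_blockStart, ← Finset.sum_sub_distrib]
    refine (norm_sum_le_of_le _ fun m _ => norm_birk_zeroLast_sub_birk_le ..).trans_eq ?_
    simp only [Finset.sum_const, Finset.card_range, nsmul_one]

theorem exists_mem_DF_dist_le {w₀ w : Seq3} {n : ℕ} (hw : w 0 ≠ 0) (hn : 0 < n)
    (h : ∀ i < n, w₀ i = w i) {v : Fin 3 → ℝ} (hv : v ∈ DF w₀) :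
    ∃ v' ∈ DF w, dist v v' ≤ 1 / n := by
  obtain ⟨s, hs, hsv⟩ := hv
  obtain ⟨x, hx, hxs⟩ := exists_mem_betaShift_norm_birk_sub_le hw hn h hs
  let k : ℕ → ℕ := blockStart fun _ => n
  have hk : Tendsto k atTop atTop := (strictMono_blockStart fun _ => hn).tendsto_atTop
  have hclose (j : ℕ) : dist ((k j : ℝ)⁻¹ • birk s (k j)) ((k j : ℝ)⁻¹ • birk x (k j)) ≤ 1 / n := by
    have hkj : (k j : ℝ) * (1 / n) = j := by
      simp only [k, blockStart, Finset.sum_const, Finset.card_range, smul_eq_mul, Nat.cast_mul]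
      field_simp
    rw [dist_eq_norm', ← smul_sub, norm_smul, norm_inv, Real.norm_natCast]
    exact inv_mul_le_of_le_mul₀ (by positivity) (by positivity) ((hxs j).trans_eq hkj.symm)
  obtain ⟨v', -, φ, hφ, hv'⟩ := (isCompact_closedBall 0 1).tendsto_subseq fun j =>
    mem_closedBall_zero_iff.2 (norm_inv_smul_birk_le_one x (k j))
  have hkφ := hk.comp hφ.tendsto_atTop
  exact ⟨v', DFMZ_subset_DF hw ⟨fun _ => x, k ∘ φ, fun _ => hx, hkφ, hv'⟩,
    le_of_tendsto' ((hsv.comp hkφ).dist hv') fun j => hclose (φ j)⟩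

end DigitFrequencySet

section MaxSeq

open TopologicalSpace

theorem continuous_shift_iterate (r : ℕ) : Continuous shift^[r] :=
  continuous_pi fun i => by simpa only [shift_iterate_apply] using continuous_apply (r + i)

theorem isClosed_maxSet : IsClosed MaxSet := by
  simp only [MaxSet, lexLe_iff_toLex_le, Set.ofPred_and, Set.ofPred_forall]
  exact (isClosed_singleton.preimage (continuous_apply 0)).inter <| isClosed_iInter fun r =>
    isClosed_le (continuous_toLex.comp (continuous_shift_iterate r)) continuous_toLex

/-- The space `Max` of maximal sequences, as a subspace of `Lex Seq3` so that it is linearly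
ordered lexicographically. -/
abbrev MaxSeq := {w : Lex Seq3 // ofLex w ∈ MaxSet}

instance compactSpaceMaxSeq : CompactSpace MaxSeq :=
  isCompact_iff_compactSpace.1 (isClosed_maxSet.preimage continuous_ofLex).isCompact

theorem apply_zero_ne_zero_of_mem_maxSet {w : Seq3} (hw : w ∈ MaxSet) : w 0 ≠ 0 := by
  rw [hw.1]
  decide

/-- The digit frequency set `DF(w)` of a maximal sequence as a point of the hyperspace of nonempty
compact sets with the Hausdorff metric. -/
def dfCompacts (w : MaxSeq) : NonemptyCompacts (Fin 3 → ℝ) where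
  carrier := DF (ofLex w.1)
  isCompact' := isCompact_DF (apply_zero_ne_zero_of_mem_maxSet w.2)
  nonempty' := ⟨_, single_zero_mem_DF _⟩

theorem monotone_dfCompacts : Monotone dfCompacts :=
  fun _ _ h => DF_mono (lexLe_iff_toLex_le.2 h)

theorem eventually_forall_lt_eq {α : Type*} [TopologicalSpace α] [DiscreteTopology α] (w : ℕ → α)
    (n : ℕ) : ∀ᶠ u in 𝓝 w, ∀ i < n, u i = w i :=
  (eventually_all_finite (Set.finite_Iio n)).2 fun i _ =>
    (continuous_apply i).continuousAt ((isOpen_discrete {w i}).mem_nhds rfl)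

theorem dist_dfCompacts_le {n : ℕ} (hn : 0 < n) {w w' : MaxSeq}
    (h : ∀ i < n, ofLex w.1 i = ofLex w'.1 i) : dist (dfCompacts w) (dfCompacts w') ≤ 1 / n := by
  rw [Metric.NonemptyCompacts.dist_eq]
  exact Metric.hausdorffDist_le_of_mem_dist (by positivity)
    (fun _ => exists_mem_DF_dist_le (apply_zero_ne_zero_of_mem_maxSet w'.2) hn h)
    (fun _ => exists_mem_DF_dist_le (apply_zero_ne_zero_of_mem_maxSet w.2) hn
      fun i hi => (h i hi).symm)

theorem continuous_dfCompacts : Continuous dfCompacts := by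
  refine continuous_iff_continuousAt.2 fun w => Metric.tendsto_nhds.2 fun ε hε => ?_
  obtain ⟨n, hn⟩ := exists_nat_one_div_lt hε
  have hagree : ∀ᶠ w' : MaxSeq in 𝓝 w, ∀ i < n + 1, ofLex w'.1 i = ofLex w.1 i :=
    (continuous_ofLex.comp continuous_subtype_val).continuousAt.eventually
      (eventually_forall_lt_eq (ofLex w.1) (n + 1))
  filter_upwards [hagree] with w' hw'
  exact (dist_dfCompacts_le n.succ_pos hw').trans_lt (mod_cast hn)

end MaxSeq

section Gaps

/-- The sequence that follows `s` for the first `n` digits and is `0` afterwards. -/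
def truncate (n : ℕ) (s : Seq3) : Seq3 := fun i => if i < n then s i else 0

theorem truncate_apply_le (n : ℕ) (s : Seq3) (i : ℕ) : truncate n s i ≤ s i := by
  rw [truncate]
  split_ifs
  · exact le_rfl
  · exact Fin.zero_le _

theorem truncate_truncate (n : ℕ) (s : Seq3) : truncate n (truncate n s) = truncate n s :=
  funext fun _ => ite_congr rfl (fun h => if_pos h) fun _ => rfl

theorem truncate_lexLe (n : ℕ) (s : Seq3) : lexLe (truncate n s) s :=
  lexLe_iff_forall.2 fun i _ => truncate_apply_le n s i

theorem truncate_mem_maxSet {n : ℕ} (hn : 0 < n) {w : Seq3} (hw : w ∈ MaxSet) :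
    truncate n w ∈ MaxSet := by
  refine ⟨(if_pos hn).trans hw.1, fun r => lexLe_iff_forall.2 fun d hd => ?_⟩
  simp only [shift_iterate_apply, truncate] at hd ⊢
  split_ifs with hrd hdn
  · refine apply_add_le_of_mem_betaShift hw.2 fun i hi => ?_
    simpa only [if_pos (show r + i < n by lia), if_pos (show i < n by lia)] using hd i hi
  · lia
  all_goals exact Fin.zero_le _

theorem eq_of_lexLe_of_truncate_eq {n : ℕ} {t w : Seq3} (hw : truncate n w = w) (ht : lexLe t w)
    (h : ∀ i < n, t i = w i) : t = w := by
  have hwt : truncate n t = w := by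
    rw [← hw]
    exact funext fun i => ite_congr rfl (h i) fun _ => rfl
  have hwle : lexLe w t := hwt ▸ truncate_lexLe n t
  exact toLex.injective ((lexLe_iff_toLex_le.1 ht).antisymm (lexLe_iff_toLex_le.1 hwle))

theorem eventually_eq_zero_of_mem_betaShift {n p : ℕ} {s w : Seq3} (hw : truncate n w = w)
    (hs : s ∈ BetaShift w) (h : ∀ i < n, s (p + i) = w i) : ∀ᶠ i in atTop, s i = 0 := by
  have hshift : shift^[p] s = w := eq_of_lexLe_of_truncate_eq hw (hs p) fun i hi => by
    rw [shift_iterate_apply, h i hi]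
  filter_upwards [eventually_ge_atTop (p + n)] with i hi
  obtain ⟨k, rfl⟩ := Nat.exists_eq_add_of_le hi
  rw [add_assoc, ← shift_iterate_apply s, hshift, ← hw]
  exact if_neg (by lia)

theorem shift_iterate_mem_orbitClosure {s t : Seq3} (ht : t ∈ orbitClosure s) (r : ℕ) :
    shift^[r] t ∈ orbitClosure s := by
  refine map_mem_closure (continuous_shift_iterate r) ht ?_
  rintro _ ⟨m, rfl⟩
  exact ⟨r + m, Function.iterate_add_apply ..⟩

theorem exists_forall_lexLe_mem_orbitClosure (s : Seq3) :
    ∃ t ∈ orbitClosure s, ∀ u ∈ orbitClosure s, lexLe u t := by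
  obtain ⟨t, ht, hmax⟩ := ((isClosed_closure (s := {t | ∃ r, shift^[r] s = t})).preimage
    continuous_ofLex).isCompact.exists_isGreatest ⟨toLex s, subset_closure ⟨0, rfl⟩⟩
  exact ⟨ofLex t, ht, fun u hu => lexLe_iff_toLex_le.2 (hmax hu)⟩

theorem lexLe_of_mem_orbitClosure {s t w : Seq3} (hs : s ∈ BetaShift w)
    (ht : t ∈ orbitClosure s) : lexLe t w := by
  have hclosed : IsClosed {u | lexLe u w} := by
    simp only [lexLe_iff_toLex_le]
    exact isClosed_le continuous_toLex continuous_const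
  refine closure_minimal ?_ hclosed ht
  rintro _ ⟨r, rfl⟩
  exact hs r

theorem eventually_eq_zero_of_mem_orbitClosure {n : ℕ} {s w : Seq3} (hw : truncate n w = w)
    (hs : s ∈ BetaShift w) (hmem : w ∈ orbitClosure s) : ∀ᶠ i in atTop, s i = 0 := by
  obtain ⟨_, ⟨p, rfl⟩, h⟩ := ((mem_closure_iff_frequently.1 hmem).and_eventually
    (eventually_forall_lt_eq w n)).exists
  exact eventually_eq_zero_of_mem_betaShift hw hs fun i hi => by
    rw [← shift_iterate_apply s, h i hi]

theorem exists_truncate_eq_of_covBy {a b : MaxSeq} (h : a ⋖ b) :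
    ∃ n, truncate n (ofLex b.1) = ofLex b.1 := by
  obtain ⟨n, heq, hlt⟩ := h.lt
  let T : MaxSeq := ⟨toLex (truncate (n + 1) (ofLex b.1)), truncate_mem_maxSet n.succ_pos b.2⟩
  have haT : a < T := by
    refine ⟨n, fun i hi => (heq i hi).trans (if_pos (by lia)).symm, ?_⟩
    exact hlt.trans_eq (if_pos n.lt_succ_self).symm
  have hTb : T ≤ b := lexLe_iff_toLex_le.1 (truncate_lexLe ..)
  exact ⟨n + 1, congrArg (fun u : MaxSeq => ofLex u.1) (hTb.antisymm (h.ge_of_gt haT))⟩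

theorem lexLe_or_eq_of_covBy {a b : MaxSeq} (h : a ⋖ b) {t : Seq3} (ht : ∀ r, lexLe (shift^[r] t) t)
    (htb : lexLe t (ofLex b.1)) : lexLe t (ofLex a.1) ∨ t = ofLex b.1 := by
  by_cases ht_zero : t 0 = 2
  · let T : MaxSeq := ⟨toLex t, ht_zero, ht⟩
    rcases le_or_gt T a with hTa | haT
    · exact .inl (lexLe_iff_toLex_le.2 hTa)
    · have hTb : T ≤ b := lexLe_iff_toLex_le.1 htb
      exact .inr (congrArg (fun u : MaxSeq => ofLex u.1) (hTb.antisymm (h.ge_of_gt haT)))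
  · refine .inl (.inr ⟨0, fun i hi => absurd hi i.not_lt_zero, ?_⟩)
    rw [a.2.1]
    exact lt_of_le_of_ne (Fin.le_last _) ht_zero

theorem dfCompacts_eq_of_covBy {a b : MaxSeq} (h : a ⋖ b) : dfCompacts a = dfCompacts b := by
  refine (monotone_dfCompacts h.le).antisymm ?_
  rintro v ⟨s, hs, hv⟩
  -- If `t` is the greatest point of the orbit closure of `s ∈ B(b)`, then `s ∈ B(t)` and either
  -- `t ≤ a` or `t = b`. In the second case the orbit of `s` meets the cylinder of the finite word
  -- that determines `b`, which forces `s` to end in `0^∞`.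
  obtain ⟨t, ht, ht_max⟩ := exists_forall_lexLe_mem_orbitClosure s
  have hst : s ∈ BetaShift t := fun r => ht_max _ (subset_closure ⟨r, rfl⟩)
  rcases lexLe_or_eq_of_covBy h (fun r => ht_max _ (shift_iterate_mem_orbitClosure ht r))
    (lexLe_of_mem_orbitClosure hs ht) with hta | rfl
  · exact ⟨s, betaShift_mono hta hst, hv⟩
  · obtain ⟨n, hn⟩ := exists_truncate_eq_of_covBy h
    have hfreq := hasFreq_of_eventually_eq (eventually_eq_zero_of_mem_orbitClosure hn hs ht)
    exact tendsto_nhds_unique hv hfreq ▸ single_zero_mem_DF _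

theorem lexLe_two (s : Seq3) : lexLe s fun _ => 2 :=
  lexLe_iff_forall.2 fun _ _ => Fin.le_last _

theorem two_mem_maxSet : (fun _ => 2) ∈ MaxSet := ⟨rfl, fun _ => lexLe_two _⟩

theorem apply_two_eq_zero_of_mem_DF_truncate {v : Fin 3 → ℝ}
    (hv : v ∈ DF (truncate 1 fun _ => 2)) : v 2 = 0 := by
  obtain ⟨s, hs, hv⟩ := hv
  refine apply_eq_zero_of_hasFreq hv ?_
  by_cases h : ∃ p, s p = 2
  · obtain ⟨p, hp⟩ := h
    have hzero : ∀ᶠ i in atTop, s i = 0 :=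
      eventually_eq_zero_of_mem_betaShift (n := 1) (p := p) (truncate_truncate ..) hs fun i hi => by
        rw [Nat.lt_one_iff.1 hi]
        exact hp
    exact hzero.mono fun i hi => by rw [hi]; decide
  · exact .of_forall fun i hi => h ⟨i, hi⟩

theorem exists_dfCompacts_ne : ∃ a b, dfCompacts a ≠ dfCompacts b := by
  refine ⟨⟨toLex (truncate 1 fun _ => 2), truncate_mem_maxSet one_pos two_mem_maxSet⟩,
    ⟨toLex fun _ => 2, two_mem_maxSet⟩, fun heq => ?_⟩
  have hmem : Pi.single 2 1 ∈ DF fun _ => 2 :=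
    ⟨fun _ => 2, fun _ => lexLe_two _, hasFreq_of_eventually_eq (.of_forall fun _ => rfl)⟩
  have hzero := apply_two_eq_zero_of_mem_DF_truncate (heq.ge hmem)
  exact one_ne_zero ((Pi.single_eq_same _ _).symm.trans hzero)

end Gaps

/-- The collection `𝒟 = {DF(w) : w ∈ Max}`, with the Hausdorff metric,
is totally ordered by inclusion and is order-preserving homeomorphic to a compact
interval. -/
theorem stmt11 :
    ∃ F : {w : Seq3 // w ∈ MaxSet} → TopologicalSpace.NonemptyCompacts (Fin 3 → ℝ),
      (∀ w, (F w : Set (Fin 3 → ℝ)) = DF w.1) ∧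
      (∀ w w' : {w : Seq3 // w ∈ MaxSet},
        (F w : Set (Fin 3 → ℝ)) ⊆ (F w' : Set (Fin 3 → ℝ)) ∨
          (F w' : Set (Fin 3 → ℝ)) ⊆ (F w : Set (Fin 3 → ℝ))) ∧
      ∃ h : ↥(Set.range F) ≃ₜ ↥(Set.Icc (0 : ℝ) 1),
        ∀ Λ Λ' : ↥(Set.range F),
          ((Λ : TopologicalSpace.NonemptyCompacts (Fin 3 → ℝ)) : Set (Fin 3 → ℝ)) ⊆
              ((Λ' : TopologicalSpace.NonemptyCompacts (Fin 3 → ℝ)) : Set (Fin 3 → ℝ)) ↔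
            (h Λ : ℝ) ≤ (h Λ' : ℝ) := by
  refine ⟨fun w => dfCompacts ⟨toLex w.1, w.2⟩, fun _ => rfl, fun w w' => ?_, ?_⟩
  · exact (le_total (⟨toLex w.1, w.2⟩ : MaxSeq) ⟨toLex w'.1, w'.2⟩).imp
      (monotone_dfCompacts ·) (monotone_dfCompacts ·)
  -- `Lex Seq3` unfolds to `Seq3`, so this map has the same range as `dfCompacts`.
  · exact exists_homeomorph_range_Icc_of_covBy (F := dfCompacts) continuous_dfCompacts
      monotone_dfCompacts (fun _ _ => dfCompacts_eq_of_covBy) continuous_whitneyMap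
      strictMono_whitneyMap exists_dfCompacts_ne
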